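/- (Generalized Hermite polynomials are Dunkl–Appell) Assume μ ≠ −k − 1/2 for every integer k ≥ 0 and let γ_{n+1} = (n + 1 + δ_{n+1})/2. Then the monic generalized Hermite polynomials P_n satisfy T_μ P_{n+1} = μ_{n+1}·P_n for all n ≥ 0; equivalently Q_n = P_n, where Q_n = μ_{n+1}^{−1}·T_μ P_{n+1}. -/

import Mathlib

/-!
Since `P n` has the parity of `n`, multiplying by `X` removes the division in the Dunkl operator:
`X * T_μ (P n) = X * (P n)' + δ_n P n`. The claim therefore becomes
`X * (P (n+1))' + δ_{n+1} P (n+1) = μ_{n+1} X * P n`, which follows by two-step induction from the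
recurrence, because `γ_n = μ_n / 2` gives `γ_{n+1} μ_n = μ_{n+1} γ_n` and
`μ_{n+1} + 1 - δ_{n+1} + δ_n = μ_{n+2}`. Finally, `X` is cancelled.
-/

open Polynomial

/-- The one-dimensional Dunkl operator `T_μ`:
`(T_μ f)(x) = f'(x) + μ (f(x) - f(-x))/x`. -/
noncomputable def dunkl (μ : ℝ) (f : ℝ[X]) : ℝ[X] :=
  derivative f + C μ * ((f - f.comp (-X)) /ₘ X)

/-- `μ_k = k + μ(1 - (-1)^k)`. -/
noncomputable def muI (μ : ℝ) (k : ℤ) : ℝ := k + μ * (1 - (-1 : ℝ) ^ k)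

/-- `δ_k = μ(1 - (-1)^k)`. -/
noncomputable def deltaI (μ : ℝ) (k : ℤ) : ℝ := μ * (1 - (-1 : ℝ) ^ k)

/-- The division by `X` in the Dunkl operator is exact. -/
lemma X_mul_dunkl (μ : ℝ) (f : ℝ[X]) :
    X * dunkl μ f = X * derivative f + C μ * (f - f.comp (-X)) := by
  have h := modByMonic_add_div (f - f.comp (-X)) (X : ℝ[X])
  have h0 : (f - f.comp (-X)) %ₘ X = 0 := by
    rw [modByMonic_X]; simp
  rw [h0, zero_add] at h
  unfold dunkl
  linear_combination C μ * h

lemma deltaI_natCast_succ (μ : ℝ) (n : ℕ) :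
    deltaI μ ((n : ℤ) + 1) = μ * (1 + (-1) ^ n) := by
  have h : ((-1 : ℝ)) ^ ((n : ℤ) + 1) = -(-1) ^ n := by
    rw [zpow_add_one₀ (by norm_num), zpow_natCast]; ring
  rw [deltaI, h]; ring

lemma muI_natCast_succ (μ : ℝ) (n : ℕ) :
    muI μ ((n : ℤ) + 1) = n + 1 + μ * (1 + (-1) ^ n) := by
  rw [← deltaI_natCast_succ, muI, deltaI]; push_cast; ring

/-- Polynomials generated by a symmetric three-term recurrence have the parity of their index. -/
lemma comp_neg_X_of_recurrence (c : ℕ → ℝ) (P : ℕ → ℝ[X]) (hP0 : P 0 = 1) (hP1 : P 1 = X)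
    (hPrec : ∀ n, P (n + 2) = X * P (n + 1) - C (c n) * P n) (n : ℕ) :
    (P n).comp (-X) = C ((-1) ^ n) * P n := by
  induction n using Nat.twoStepInduction with
  | zero => simp [hP0]
  | one => simp [hP1]
  | more n h0 h1 =>
    rw [hPrec, sub_comp, mul_comp, mul_comp, h0, h1, X_comp, C_comp]
    simp only [pow_succ, map_mul, map_neg, map_one]
    ring

/-- The Dunkl–Appell property multiplied by `X`, with the parity of `P (n + 1)` taken into
account. -/
lemma X_mul_derivative_add (μ : ℝ) (P : ℕ → ℝ[X]) (hP0 : P 0 = 1) (hP1 : P 1 = X)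
    (hPrec : ∀ n : ℕ,
      P (n + 2) = X * P (n + 1) - C (((n : ℝ) + 1 + μ * (1 + (-1) ^ n)) / 2) * P n) (n : ℕ) :
    X * derivative (P (n + 1)) + C (μ * (1 + (-1) ^ n)) * P (n + 1)
      = C ((n : ℝ) + 1 + μ * (1 + (-1) ^ n)) * (X * P n) := by
  induction n using Nat.twoStepInduction with
  | zero => simp [hP0, hP1]; ring
  | one =>
    have h2 := hPrec 0
    simp only [zero_add, hP0, hP1, mul_one] at h2
    have hC : C ((1 : ℝ) + 1) = 2 := by rw [map_add, map_one]; norm_num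
    have h0 : μ * (1 + (-1 : ℝ) ^ 1) = 0 := by norm_num
    simp only [Nat.reduceAdd, Nat.cast_one, h0, add_zero, hC, map_zero, h2, hP1, derivative_sub,
      derivative_mul, derivative_X, derivative_C]
    ring
  | more n h0 h1 =>
    -- All coefficients become polynomials in `C n`, `C μ`, `C ((-1) ^ n)` and `C 2⁻¹`.
    have r1 := hPrec n
    have r2 := hPrec (n + 1)
    have d2 := congrArg derivative r2
    simp only [div_eq_mul_inv, pow_succ, derivative_sub, derivative_mul, derivative_X,
      derivative_one, derivative_C, map_ofNat, map_mul, map_add, map_neg, map_one, Nat.cast_add,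
      Nat.cast_one, Nat.cast_ofNat, zero_mul, zero_add, one_mul] at h0 h1 r1 r2 d2 ⊢
    rw [d2]
    linear_combination
      C μ * (1 + C ((-1) ^ n)) * r2 + X * h1
        - (C (n : ℝ) + 1 + 1 + C μ * (1 - C ((-1) ^ n))) * C (2⁻¹ : ℝ) * h0
        - (C (n : ℝ) + 1 + 1 + C μ * (1 - C ((-1) ^ n))) * X * r1

/-- **Statement 10.** The monic generalized Hermite polynomials (recurrence coefficients
`γ_{n+1} = (n + 1 + δ_{n+1})/2`) form a Dunkl–Appell sequence:
`T_μ P_{n+1} = μ_{n+1} P_n` for all `n ≥ 0`. -/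
theorem generalizedHermite_dunkl_appell (μ : ℝ)
    (hμ : ∀ k : ℕ, μ ≠ -(k : ℝ) - 1 / 2)
    (P : ℕ → ℝ[X]) (hP0 : P 0 = 1) (hP1 : P 1 = X)
    (hPrec : ∀ n : ℕ,
      P (n + 2) = X * P (n + 1) - C (((n : ℝ) + 1 + deltaI μ (n + 1)) / 2) * P n) :
    ∀ n : ℕ, dunkl μ (P (n + 1)) = C (muI μ (n + 1)) * P n := by
  intro n
  have hpar := comp_neg_X_of_recurrence _ P hP0 hP1 hPrec (n + 1)
  simp only [deltaI_natCast_succ] at hPrec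
  have key := X_mul_derivative_add μ P hP0 hP1 hPrec n
  apply mul_left_cancel₀ (X_ne_zero (R := ℝ))
  rw [X_mul_dunkl, hpar, muI_natCast_succ]
  simp only [pow_succ, map_mul, map_add, map_neg, map_one] at key ⊢
  linear_combination key
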